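/- arXiv:math/0609361 — 9 statements merged into one kernel-verified Lean document; each statement's English description precedes it below -/
import Mathlib

section
/- Let u be a t × t matrix over ℤ_p such that p^{b_j} divides the entry u_{i,j} for all i, j. Write the characteristic polynomial of u as Σ_{s=0}^{t} d_s X^{t−s} (so d_0 = 1). Then for every 0 ≤ s ≤ t, the coefficient d_s is divisible by p^{B(s)}. -/
theorem sum_initial_le_sum {t : ℕ} (b : Fin t → ℕ) (hb : Monotone b) (s : ℕ) (hs : s ≤ t)
    (S : Finset (Fin t)) (hS : S.card = s) :
    ∑ i ∈ Finset.univ.filter (fun i : Fin t => (i : ℕ) < s), b i ≤ ∑ i ∈ S, b i := by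
  have hI : (Finset.univ.filter (fun i : Fin t => (i : ℕ) < s)).card = s := by
    simp [Fin.card_filter_val_lt, hs]
  set I := Finset.univ.filter (fun i : Fin t => (i : ℕ) < s) with hIdef
  rcases hs.eq_or_lt with h | h
  · have : S = Finset.univ := by
      rw [← Finset.card_eq_iff_eq_univ]; simp [hS, h]
    rw [this]
    exact Finset.sum_le_sum_of_subset (Finset.subset_univ _)
  · have hc : (I \ S).card = (S \ I).card := Finset.card_sdiff_comm (hI.trans hS.symm)
    have h1 : ∑ i ∈ I \ S, b i ≤ (I \ S).card • b ⟨s, h⟩ := by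
      apply Finset.sum_le_card_nsmul
      intro i hi
      apply hb
      simp [hIdef] at hi
      exact hi.1.le
    have h2 : (S \ I).card • b ⟨s, h⟩ ≤ ∑ i ∈ S \ I, b i := by
      apply Finset.card_nsmul_le_sum
      intro i hi
      apply hb
      simp [hIdef] at hi
      exact hi.2
    rw [← Finset.sum_inter_add_sum_sdiff I S, ← Finset.sum_inter_add_sum_sdiff S I,
      Finset.inter_comm S I]
    rw [hc] at h1
    omega

theorem newton_lower_bound_matrix
    (p : ℕ) [Fact p.Prime] (n t : ℕ) (hn : 0 < n) (ht : 1 ≤ t)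
    (a : Fin t → ℕ) (ha : Antitone a) (han : ∀ i, a i ≤ n)
    (u : Matrix (Fin t) (Fin t) ℤ_[p])
    (hu : ∀ i j, ((p : ℤ_[p]) ^ (n - a j)) ∣ u i j)
    (s : ℕ) (hs : s ≤ t) :
    ((p : ℤ_[p]) ^ (∑ i ∈ Finset.univ.filter (fun i : Fin t => (i : ℕ) < s), (n - a i))) ∣
      u.charpoly.coeff (t - s) := by
  have key := Matrix.charpoly_coeff_eq_sum_minors u s (by simpa using hs)
  rw [Fintype.card_fin] at key
  rw [key]
  apply Dvd.dvd.mul_left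
  apply Finset.dvd_sum
  intro S hS
  have hS' : S.card = s := by simpa using hS
  refine (pow_dvd_pow _ (sum_initial_le_sum (fun i => n - a i)
    (fun i j hij => Nat.sub_le_sub_left (ha hij) n) s hs S hS')).trans ?_
  choose v hv using hu
  have : u.submatrix (Subtype.val : S → Fin t) Subtype.val =
      Matrix.of fun i j : S => (p : ℤ_[p]) ^ (n - a j) * v i j := by
    ext i j; simp [← hv]
  rw [this, Matrix.det_mul_row (fun j : S => (p : ℤ_[p]) ^ (n - a j))
    (fun i j : S => v i j)]
  apply Dvd.dvd.mul_right
  rw [← Finset.prod_pow_eq_pow_sum, ← Finset.prod_coe_sort]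
end

section
/- Let u and u′ be t × t matrices over ℤ_p such that for all i, j: p^{b_j} divides u_{i,j}, p^{b_j} divides u′_{i,j}, and p^{a_j} divides u_{i,j} − u′_{i,j}. Let M = ⌈n/2⌉. Write the characteristic polynomials of u and u′ as Σ_{s=0}^{t} d_s X^{t−s} and Σ_{s=0}^{t} d′_s X^{t−s} respectively. Then for every 1 ≤ s ≤ t, d_s ≡ d′_s modulo p^{M + B(s−1)}. -/
lemma aux_prod_sub {R ι : Type*} [CommRing R] [DecidableEq ι] (q : R) (M : ℕ) (b : ι → ℕ)
    (f g : ι → R) (hf : ∀ j, q ^ b j ∣ f j) (hg : ∀ j, q ^ b j ∣ g j)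
    (hfg : ∀ j, q ^ M ∣ f j - g j) (S : Finset ι) :
    ∀ K : ℕ, (∀ j ∈ S, K ≤ M + ∑ i ∈ S.erase j, b i) →
      q ^ K ∣ ∏ j ∈ S, f j - ∏ j ∈ S, g j := by
  induction S using Finset.induction_on with
  | empty => intro K _; simp
  | insert x S hx ih =>
    intro K hK
    rw [Finset.prod_insert hx, Finset.prod_insert hx]
    have e : f x * ∏ j ∈ S, f j - g x * ∏ j ∈ S, g j
        = (f x - g x) * ∏ j ∈ S, f j + g x * (∏ j ∈ S, f j - ∏ j ∈ S, g j) := by ring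
    rw [e]
    refine dvd_add ?_ ?_
    · have h1 := hK x (Finset.mem_insert_self _ _)
      rw [Finset.erase_insert hx] at h1
      refine (pow_dvd_pow q h1).trans ?_
      rw [pow_add, ← Finset.prod_pow_eq_pow_sum]
      exact mul_dvd_mul (hfg x) (Finset.prod_dvd_prod_of_dvd _ _ fun j _ => hf j)
    · have h2 : q ^ (K - b x) ∣ ∏ j ∈ S, f j - ∏ j ∈ S, g j := by
        refine ih _ fun j hj => ?_
        have h3 := hK j (Finset.mem_insert_of_mem hj)
        have hjx : x ≠ j := fun h => hx (h ▸ hj)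
        rw [Finset.erase_insert_of_ne hjx,
          Finset.sum_insert (fun h => hx (Finset.mem_of_mem_erase h))] at h3
        omega
      refine (pow_dvd_pow q (show K ≤ b x + (K - b x) by omega)).trans ?_
      rw [pow_add]
      exact mul_dvd_mul (hg x) h2

lemma aux_sum_le {t : ℕ} (b : Fin t → ℕ) (hb : Monotone b) (k : ℕ) (T : Finset (Fin t))
    (hT : T.card = k) :
    ∑ i ∈ Finset.univ.filter (fun i : Fin t => (i : ℕ) < k), b i ≤ ∑ i ∈ T, b i := by
  induction k generalizing T with
  | zero => simp
  | succ k ih =>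
    have hne : T.Nonempty := by rw [← Finset.card_pos]; omega
    have hmem := T.max'_mem hne
    have hkt : k ≤ (T.max' hne : ℕ) := by
      have hsub : T ⊆ Finset.Iic (T.max' hne) := fun x hx => by
        simpa using T.le_max' x hx
      have := Finset.card_le_card hsub
      rw [Fin.card_Iic] at this
      omega
    have hlt : k < t := lt_of_le_of_lt hkt (T.max' hne).2
    have e : Finset.univ.filter (fun i : Fin t => (i : ℕ) < k + 1)
        = insert ⟨k, hlt⟩ (Finset.univ.filter (fun i : Fin t => (i : ℕ) < k)) := by
      ext i
      simp only [Finset.mem_filter, Finset.mem_univ, true_and, Finset.mem_insert, Fin.ext_iff]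
      omega
    rw [e, Finset.sum_insert (by simp), ← Finset.add_sum_erase _ _ hmem]
    exact add_le_add (hb (by exact hkt))
      (ih _ (by rw [Finset.card_erase_of_mem hmem]; omega))

theorem charpoly_coeff_congruence
    (p : ℕ) [Fact p.Prime] (n t : ℕ) (hn : 0 < n) (ht : 1 ≤ t)
    (a : Fin t → ℕ) (ha : Antitone a) (han : ∀ i, a i ≤ n)
    (u u' : Matrix (Fin t) (Fin t) ℤ_[p])
    (hu : ∀ i j, ((p : ℤ_[p]) ^ (n - a j)) ∣ u i j)
    (hu' : ∀ i j, ((p : ℤ_[p]) ^ (n - a j)) ∣ u' i j)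
    (huu' : ∀ i j, ((p : ℤ_[p]) ^ (a j)) ∣ (u i j - u' i j))
    (s : ℕ) (hs1 : 1 ≤ s) (hst : s ≤ t) :
    ((p : ℤ_[p]) ^ ((n + 1) / 2 +
        ∑ i ∈ Finset.univ.filter (fun i : Fin t => (i : ℕ) < s - 1), (n - a i))) ∣
      (u.charpoly.coeff (t - s) - u'.charpoly.coeff (t - s)) := by
  have hb : Monotone (fun i => n - a i) := fun i j h => Nat.sub_le_sub_left (ha h) n
  have e : t - s = Fintype.card (Fin t) - s := by simp
  rw [e, Matrix.charpoly_coeff_eq_sum_minors _ _ (by simpa using hst),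
    Matrix.charpoly_coeff_eq_sum_minors _ _ (by simpa using hst), ← mul_sub,
    ← Finset.sum_sub_distrib]
  refine Dvd.dvd.mul_left (Finset.dvd_sum fun S hS => ?_) _
  have hcard : S.card = s := (Finset.mem_powersetCard.mp hS).2
  rw [Matrix.det_apply', Matrix.det_apply', ← Finset.sum_sub_distrib]
  refine Finset.dvd_sum fun σ _ => ?_
  rw [← mul_sub]
  refine Dvd.dvd.mul_left ?_ _
  refine aux_prod_sub (p : ℤ_[p]) ((n + 1) / 2) (fun j : S => n - a j.1) _ _
    (fun j => hu _ _) (fun j => hu' _ _) (fun j => ?_) _ _ (fun j _ => ?_)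
  · by_cases h : (n + 1) / 2 ≤ a j.1
    · exact (pow_dvd_pow _ h).trans (huu' _ _)
    · exact (pow_dvd_pow _ (show (n + 1) / 2 ≤ n - a j.1 by omega)).trans
        (dvd_sub (hu _ _) (hu' _ _))
  · refine Nat.add_le_add_left ?_ _
    have h := aux_sum_le (fun i => n - a i) hb (s - 1)
      ((Finset.univ.erase j).map (Function.Embedding.subtype _)) (by
        rw [Finset.card_map, Finset.card_erase_of_mem (Finset.mem_univ _)]
        simp [hcard])
    rw [Finset.sum_map] at h
    exact h
end

section
/- Let A be a commutative ring, I an ideal of A, and p a prime number whose image p·1_A lies in I. Let n ≥ 1 and let a, b ∈ A with a − b ∈ I^n. Then for every natural number s, a^{p^s} − b^{p^s} ∈ I^{n+s}. -/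
theorem pow_p_pow_sub_mem_ideal_pow
    (A : Type*) [CommRing A] (I : Ideal A) (p : ℕ) (hp : p.Prime)
    (hpI : (p : A) ∈ I) (n : ℕ) (hn : 1 ≤ n)
    (a b : A) (hab : a - b ∈ I ^ n) :
    ∀ s : ℕ, a ^ (p ^ s) - b ^ (p ^ s) ∈ I ^ (n + s) := by
  intro s
  induction s with
  | zero => simpa using hab
  | succ s ih =>
    rw [pow_succ, pow_mul, pow_mul]
    generalize a ^ (p ^ s) = x at ih ⊢
    generalize b ^ (p ^ s) = y at ih ⊢
    obtain ⟨r, hr⟩ := exists_add_pow_prime_eq hp (x - y) y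
    rw [sub_add_cancel] at hr
    have e : x ^ p - y ^ p = (x - y) ^ p + (x - y) * p * (y * r) := by
      rw [hr]; ring
    rw [e]
    refine Ideal.add_mem _ ?_ (Ideal.mul_mem_right _ _ ?_)
    · have h1 := Ideal.pow_mem_pow ih p
      rw [← pow_mul] at h1
      refine Ideal.pow_le_pow_right ?_ h1
      have := hp.two_le
      nlinarith
    · rw [← add_assoc, pow_succ]
      exact Ideal.mul_mem_mul ih hpI
end

section
/- Let b, d ∈ ℤ_p with d ≡ 1 modulo p, and let n ≥ 1. Then the polynomial Y^{p^{n−1}} − (bX + dY)^{p^{n−1}} lies in J^n. -/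
theorem aux_pow_mem {R : Type*} [CommRing R] (p : ℕ) (hp : p.Prime) (J : Ideal R)
    (hJ : (p : R) ∈ J) (u v : R) (h : u - v ∈ J) (m : ℕ) :
    u ^ (p ^ m) - v ^ (p ^ m) ∈ J ^ (m + 1) := by
  induction m with
  | zero => simpa using h
  | succ m ih =>
    rw [pow_succ p m, pow_mul, pow_mul]
    generalize u ^ p ^ m = a at ih ⊢
    generalize v ^ p ^ m = c at ih ⊢
    obtain ⟨r, hr⟩ := exists_add_pow_prime_eq hp c (a - c)
    have e : a ^ p - c ^ p = (a - c) ^ p + (a - c) * p * (c * r) := by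
      rw [add_sub_cancel] at hr
      rw [hr]; ring
    rw [e]
    refine add_mem ?_ ?_
    · refine Ideal.pow_le_pow_right ?_ (?_ : _ ∈ J ^ ((m + 1) * p))
      · nlinarith [hp.two_le]
      · rw [pow_mul]
        exact Ideal.pow_mem_pow ih p
    · refine Ideal.mul_mem_right _ _ ?_
      rw [pow_succ J (m + 1)]
      exact Ideal.mul_mem_mul ih hJ

open MvPolynomial in
theorem y_pow_sub_mem_ideal_pow
    (p : ℕ) [Fact p.Prime] (b d : ℤ_[p]) (hd : (p : ℤ_[p]) ∣ (d - 1))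
    (n : ℕ) (hn : 1 ≤ n) :
    (X 1 : MvPolynomial (Fin 2) ℤ_[p]) ^ (p ^ (n - 1)) -
        (C b * X 0 + C d * X 1) ^ (p ^ (n - 1)) ∈
      (Ideal.span {(C (p : ℤ_[p]) : MvPolynomial (Fin 2) ℤ_[p]), X 0}) ^ n := by
  obtain ⟨m, rfl⟩ : ∃ m, n = m + 1 := ⟨n - 1, by omega⟩
  rw [Nat.add_sub_cancel]
  refine aux_pow_mem p Fact.out _ ?_ _ _ ?_ m
  · refine Ideal.subset_span ?_
    simp
  · obtain ⟨e, he⟩ := hd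
    have hd' : d = 1 + p * e := by rw [← he]; ring
    rw [Ideal.mem_span_pair]
    refine ⟨-(C e * X 1), -C b, ?_⟩
    rw [hd', C_add, C_mul, C_1]
    ring
end

section
/- Let a, b, c, d ∈ ℤ_p with p ∣ c and d ≡ 1 modulo p, let n ≥ 1, and let σ be the ℤ_p-algebra endomorphism of ℤ_p[X,Y] determined by σ(X) = aX + cY and σ(Y) = bX + dY. Let φ : ℤ_p[X,Y] → ℤ_p[X,Y] be multiplication by Y^{p^{n−1}}, i.e., φ(f) = f · Y^{p^{n−1}}. Then for every f ∈ ℤ_p[X,Y], φ(σ(f)) − σ(φ(f)) ∈ J^n. -/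
theorem pow_prime_pow_sub_mem {R : Type*} [CommRing R] (J : Ideal R) (p : ℕ) (hp : (p : R) ∈ J)
    (x y : R) (h : x - y ∈ J) (k : ℕ) : x ^ (p ^ k) - y ^ (p ^ k) ∈ J ^ (k + 1) := by
  induction k with
  | zero => simpa using h
  | succ k ih =>
    have h1 : x ^ (p ^ k) - y ^ (p ^ k) ∈ J := Ideal.pow_le_self (Nat.succ_ne_zero k) ih
    rw [pow_succ p k, pow_mul, pow_mul, ← (Commute.all (x ^ p ^ k) (y ^ p ^ k)).geom_sum₂_mul p,
      pow_succ' J]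
    refine Ideal.mul_mem_mul ?_ ih
    rw [← Ideal.Quotient.eq] at h1
    rw [← Ideal.Quotient.eq_zero_iff_mem] at hp ⊢
    rw [map_natCast] at hp
    rw [map_sum]
    simp only [map_mul, map_pow] at h1 ⊢
    rw [h1, geom_sum₂_self, hp, zero_mul]

open MvPolynomial in
theorem phi_sigma_commutator_mem_ideal_pow
    (p : ℕ) [Fact p.Prime] (a b c d : ℤ_[p])
    (hpc : (p : ℤ_[p]) ∣ c) (hd : (p : ℤ_[p]) ∣ (d - 1))
    (n : ℕ) (hn : 1 ≤ n)
    (σ : MvPolynomial (Fin 2) ℤ_[p] →ₐ[ℤ_[p]] MvPolynomial (Fin 2) ℤ_[p])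
    (hσX : σ (X 0) = C a * X 0 + C c * X 1)
    (hσY : σ (X 1) = C b * X 0 + C d * X 1)
    (f : MvPolynomial (Fin 2) ℤ_[p]) :
    σ f * (X 1) ^ (p ^ (n - 1)) - σ (f * (X 1) ^ (p ^ (n - 1))) ∈
      (Ideal.span {(C (p : ℤ_[p]) : MvPolynomial (Fin 2) ℤ_[p]), X 0}) ^ n := by
  obtain ⟨m, rfl⟩ : ∃ m, n = m + 1 := ⟨n - 1, by omega⟩
  rw [map_mul, map_pow, ← mul_sub, Nat.add_sub_cancel]
  refine Ideal.mul_mem_left _ _ (pow_prime_pow_sub_mem _ p ?_ _ _ ?_ m)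
  · exact Ideal.subset_span (by simp)
  · obtain ⟨e, he⟩ := hd
    rw [hσY, Ideal.mem_span_pair]
    refine ⟨-(C e * X 1), -C b, ?_⟩
    have hd' : d = 1 + p * e := by rw [← he]; ring
    rw [hd', C_add, C_mul, C_1]
    ring
end

section
/- Let k ≥ n ≥ 1 be integers. Let H_k denote the ℤ_p-submodule of ℤ_p[X,Y] consisting of homogeneous polynomials of degree k (together with 0), and let W = H_k ∩ J^n. Then the quotient ℤ_p-module H_k / W is isomorphic to the direct sum ⊕_{j=1}^{n} ℤ_p/p^{j}ℤ_p. -/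
open MvPolynomial in
/-- The ideal of polynomials whose `m`-coefficient is divisible by `p ^ (n - m 0)`. -/
def coeffIdeal (p : ℕ) [Fact p.Prime] (n : ℕ) : Ideal (MvPolynomial (Fin 2) ℤ_[p]) where
  carrier := {f | ∀ m, (p : ℤ_[p]) ^ (n - m 0) ∣ coeff m f}
  zero_mem' := by intro m; simp
  add_mem' := by
    intro a b ha hb m
    rw [coeff_add]
    exact dvd_add (ha m) (hb m)
  smul_mem' := by
    intro c f hf m
    rw [smul_eq_mul, coeff_mul]
    refine Finset.dvd_sum fun x hx => ?_
    rw [Finset.HasAntidiagonal.mem_antidiagonal] at hx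
    refine Dvd.dvd.mul_left (dvd_trans (pow_dvd_pow _ ?_) (hf x.2)) _
    have : m 0 = x.1 0 + x.2 0 := by rw [← hx]; rfl
    omega

open MvPolynomial in
theorem pow_le_coeffIdeal (p : ℕ) [Fact p.Prime] (n : ℕ) :
    (Ideal.span {(C (p : ℤ_[p]) : MvPolynomial (Fin 2) ℤ_[p]), X 0}) ^ n ≤ coeffIdeal p n := by
  induction n with
  | zero => intro f _ m; simp
  | succ n ih =>
    rw [pow_succ, Ideal.mul_le]
    intro g hg h hh
    obtain ⟨a, b, rfl⟩ := Ideal.mem_span_pair.1 hh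
    have hga : g * a ∈ coeffIdeal p n := Ideal.mul_mem_right _ _ (ih hg)
    have hgb : g * b ∈ coeffIdeal p n := Ideal.mul_mem_right _ _ (ih hg)
    rw [mul_add, ← mul_assoc, ← mul_assoc]
    refine add_mem ?_ ?_
    · intro m
      rw [mul_comm, coeff_C_mul, mul_comm]
      refine dvd_trans (pow_dvd_pow _ (?_ : _ ≤ (n - m 0) + 1)) ?_
      · omega
      · rw [pow_succ]
        exact mul_dvd_mul_right (hga m) _
    · intro m
      rw [coeff_mul_X']
      split_ifs with hm
      · refine dvd_trans (pow_dvd_pow _ ?_) (hgb _)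
        have h0 : m 0 ≠ 0 := Finsupp.mem_support_iff.1 hm
        simp only [Finsupp.tsub_apply, Finsupp.single_eq_same]
        omega
      · exact dvd_zero _

open MvPolynomial in
theorem coeffIdeal_le_pow (p : ℕ) [Fact p.Prime] (n : ℕ) :
    coeffIdeal p n ≤ (Ideal.span {(C (p : ℤ_[p]) : MvPolynomial (Fin 2) ℤ_[p]), X 0}) ^ n := by
  intro f hf
  rw [f.as_sum]
  refine Ideal.sum_mem _ fun m _ => ?_
  obtain ⟨c, hc⟩ := hf m
  have key : monomial m (coeff m f) =
      (C (p : ℤ_[p]) ^ (n - m 0) * X 0 ^ (m 0)) * monomial (m - Finsupp.single 0 (m 0)) c := by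
    rw [hc, X_pow_eq_monomial, ← C_pow, C_mul_monomial, monomial_mul, mul_one,
      add_tsub_cancel_of_le]
    exact Finsupp.single_le_iff.2 le_rfl
  rw [key]
  refine Ideal.mul_mem_right _ _ (Ideal.pow_le_pow_right (?_ : n ≤ (n - m 0) + m 0) ?_)
  · omega
  · rw [pow_add]
    exact Ideal.mul_mem_mul (Ideal.pow_mem_pow (Ideal.subset_span (by simp)) _)
      (Ideal.pow_mem_pow (Ideal.subset_span (by simp)) _)

/-- The exponent of `X ^ i * Y ^ (k - i)`. -/
noncomputable def expo (k i : ℕ) : Fin 2 →₀ ℕ :=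
  Finsupp.single 0 i + Finsupp.single 1 (k - i)

theorem expo_zero (k i : ℕ) : expo k i 0 = i := by simp [expo]

theorem expo_degree (k i : ℕ) (h : i ≤ k) : (expo k i).degree = k := by
  rw [Finsupp.degree_eq_sum, Fin.sum_univ_two]
  simp [expo]
  omega

theorem eq_expo (k : ℕ) (m : Fin 2 →₀ ℕ) (h : m.degree = k) : m = expo k (m 0) := by
  have h2 : m 0 + m 1 = k := by
    rw [← h, Finsupp.degree_eq_sum, Fin.sum_univ_two]
  ext i
  fin_cases i
  · simp [expo]
  · simp [expo]; omega

open MvPolynomial in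
/-- The coefficient map. -/
noncomputable def coeffMap (p : ℕ) [Fact p.Prime] (n k : ℕ) :
    ↥(homogeneousSubmodule (Fin 2) ℤ_[p] k) →ₗ[ℤ_[p]]
      (∀ j : Fin n, ℤ_[p] ⧸ Ideal.span {(p : ℤ_[p]) ^ ((j : ℕ) + 1)}) :=
  LinearMap.pi fun j =>
    (Submodule.mkQ (Ideal.span {(p : ℤ_[p]) ^ ((j : ℕ) + 1)})) ∘ₗ
      (lcoeff ℤ_[p] (expo k (n - 1 - j))) ∘ₗ (homogeneousSubmodule (Fin 2) ℤ_[p] k).subtype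

open MvPolynomial in
theorem coeffMap_apply (p : ℕ) [Fact p.Prime] (n k : ℕ)
    (f : ↥(homogeneousSubmodule (Fin 2) ℤ_[p] k)) (j : Fin n) :
    coeffMap p n k f j = Submodule.Quotient.mk (coeff (expo k (n - 1 - j)) f.1) := rfl

open MvPolynomial in
theorem coeffMap_surjective (p : ℕ) [Fact p.Prime] (n k : ℕ) (hk : n ≤ k) :
    Function.Surjective (coeffMap p n k) := by
  intro y
  choose c hc using fun j => Submodule.Quotient.mk_surjective _ (y j)
  refine ⟨⟨∑ j : Fin n, monomial (expo k (n - 1 - j)) (c j), ?_⟩, ?_⟩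
  · refine Submodule.sum_mem _ fun j _ => ?_
    rw [mem_homogeneousSubmodule]
    exact isHomogeneous_monomial _ (expo_degree _ _ (by omega))
  · funext j
    rw [coeffMap_apply, ← hc j]
    congr 1
    simp only [coeff_sum, coeff_monomial]
    rw [Finset.sum_eq_single j]
    · simp
    · intro b _ hb
      rw [if_neg]
      intro h
      apply hb
      have := DFunLike.congr_fun h 0
      rw [expo_zero, expo_zero] at this
      ext
      omega
    · simp

open MvPolynomial in
theorem coeffMap_ker (p : ℕ) [Fact p.Prime] (n k : ℕ) :
    (Submodule.comap (homogeneousSubmodule (Fin 2) ℤ_[p] k).subtype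
            (Submodule.restrictScalars ℤ_[p]
              ((Ideal.span {(C (p : ℤ_[p]) : MvPolynomial (Fin 2) ℤ_[p]), X 0}) ^ n)))
      = LinearMap.ker (coeffMap p n k) := by
  rw [le_antisymm (pow_le_coeffIdeal p n) (coeffIdeal_le_pow p n)]
  ext f
  rw [LinearMap.mem_ker, Submodule.mem_comap, Submodule.restrictScalars_mem, funext_iff]
  have hz : ∀ j : Fin n, coeffMap p n k f j = 0 ↔
      (p : ℤ_[p]) ^ ((j : ℕ) + 1) ∣ coeff (expo k (n - 1 - j)) f.1 := by
    intro j
    rw [coeffMap_apply, Submodule.Quotient.mk_eq_zero, Ideal.mem_span_singleton]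
  constructor
  · intro h j
    refine (hz j).2 ?_
    have := h (expo k (n - 1 - j))
    rw [expo_zero] at this
    rw [show n - (n - 1 - (j : ℕ)) = j + 1 by omega] at this
    exact this
  · intro h m
    change _ ∣ coeff m f.1
    by_cases hc : coeff m f.1 = 0
    · rw [hc]; exact dvd_zero _
    by_cases hm : m 0 < n
    · have hd : m.degree = k := by
        have := (mem_homogeneousSubmodule _ _).1 f.2 hc
        rwa [Finsupp.degree_eq_weight_one]
      have := (hz ⟨n - 1 - m 0, by omega⟩).1 (h _)
      simp only at this
      rw [show n - 1 - (n - 1 - m 0) = m 0 by omega, ← eq_expo k m hd,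
        show n - 1 - m 0 + 1 = n - m 0 by omega] at this
      exact this
    · rw [show n - m 0 = 0 by omega]; simp

set_option synthInstance.maxHeartbeats 1000000 in
open MvPolynomial in
theorem homogeneous_quotient_structure
    (p : ℕ) [Fact p.Prime] (n k : ℕ) (hn : 1 ≤ n) (hk : n ≤ k) :
    Nonempty
      ((↥(homogeneousSubmodule (Fin 2) ℤ_[p] k) ⧸
          (Submodule.comap (homogeneousSubmodule (Fin 2) ℤ_[p] k).subtype
            (Submodule.restrictScalars ℤ_[p]
              ((Ideal.span {(C (p : ℤ_[p]) : MvPolynomial (Fin 2) ℤ_[p]), X 0}) ^ n)))) ≃ₗ[ℤ_[p]]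
        (∀ j : Fin n, ℤ_[p] ⧸ Ideal.span {(p : ℤ_[p]) ^ ((j : ℕ) + 1)})) := by
  exact ⟨(Submodule.quotEquivOfEq _ _ (coeffMap_ker p n k)).trans
    ((coeffMap p n k).quotKerEquivOfSurjective (coeffMap_surjective p n k hk))⟩
end

section
/- Let p be a prime, n ≥ 1 an integer, and P a finite abelian group (written additively) such that p^n · x = 0 for all x ∈ P. Let S be a subgroup of P, T a subgroup of S, and Q = S/T. For an abelian group G and a natural number μ, let p^μ G denote the image of the map x ↦ p^μ · x on G. Then for every 0 ≤ μ ≤ n − 1: |p^μ Q| · |p^{μ+1} P| ≤ |p^μ P| · |p^{μ+1} Q| (equivalently, |p^μ Q / p^{μ+1} Q| ≤ |p^μ P / p^{μ+1} P|). -/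
theorem card_map_aux {G H : Type*} [AddCommGroup G] [AddCommGroup H] (φ : G →+ H)
    (A : AddSubgroup G) :
    Nat.card (A.map φ) * Nat.card (A ⊓ φ.ker : AddSubgroup G) = Nat.card A := by
  have h1 := (φ.comp A.subtype).ker.index_mul_card
  rw [AddSubgroup.index_ker, AddMonoidHom.range_comp, AddSubgroup.range_subtype] at h1
  rw [← h1]
  congr 1
  refine Nat.card_congr ⟨fun x => ⟨⟨x.1, x.2.1⟩, x.2.2⟩, fun x => ⟨x.1.1, x.1.2, x.2⟩, ?_, ?_⟩
  · intro x; rfl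
  · intro x; rfl

theorem card_map_le_aux {G H : Type*} [AddCommGroup G] [AddCommGroup H] [Finite G] (φ : G →+ H)
    (A B : AddSubgroup G) (h : B ≤ A) :
    Nat.card (A.map φ) * Nat.card B ≤ Nat.card A * Nat.card (B.map φ) := by
  rw [← card_map_aux φ A, ← card_map_aux φ B]
  have : Nat.card (B ⊓ φ.ker : AddSubgroup G) ≤ Nat.card (A ⊓ φ.ker : AddSubgroup G) :=
    AddSubgroup.card_le_of_le (inf_le_inf_right _ h)
  calc _ = Nat.card (A.map φ) * Nat.card (B.map φ) * Nat.card (B ⊓ φ.ker : AddSubgroup G) := by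
        ring
    _ ≤ Nat.card (A.map φ) * Nat.card (B.map φ) * Nat.card (A ⊓ φ.ker : AddSubgroup G) :=
        Nat.mul_le_mul_left _ this
    _ = _ := by ring

theorem subquotient_graded_piece_card_le
    (p : ℕ) (hp : p.Prime) (n : ℕ) (hn : 1 ≤ n)
    (P : Type*) [AddCommGroup P] [Finite P] (hP : ∀ x : P, p ^ n • x = 0)
    (S T : AddSubgroup P) (hTS : T ≤ S)
    (μ : ℕ) (hμ : μ ≤ n - 1) :
    Nat.card (Set.range fun x : (S ⧸ T.addSubgroupOf S) => p ^ μ • x) *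
        Nat.card (Set.range fun x : P => p ^ (μ + 1) • x) ≤
      Nat.card (Set.range fun x : P => p ^ μ • x) *
        Nat.card (Set.range fun x : (S ⧸ T.addSubgroupOf S) => p ^ (μ + 1) • x) := by
  -- `A k` is `p ^ k S` and `B k` is `p ^ k P`
  let π := QuotientAddGroup.mk' (T.addSubgroupOf S)
  let A : ℕ → AddSubgroup S := fun k => (nsmulAddMonoidHom (α := S) (p ^ k)).range
  let B : ℕ → AddSubgroup P := fun k => (nsmulAddMonoidHom (α := P) (p ^ k)).range
  have hA : A (μ + 1) ≤ A μ := by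
    rintro _ ⟨y, rfl⟩
    exact ⟨p • y, by simp [pow_succ, mul_smul]⟩
  have hAB : (A μ).map S.subtype ≤ B μ := by
    rintro _ ⟨_, ⟨y, rfl⟩, rfl⟩
    exact ⟨y, by simp⟩
  have h1 := card_map_le_aux π _ _ hA
  have h2 := card_map_le_aux (nsmulAddMonoidHom (α := P) p) _ _ hAB
  have e1 : ∀ k, Nat.card ((A k).map π) =
      Nat.card (Set.range fun x : (S ⧸ T.addSubgroupOf S) => p ^ k • x) := by
    intro k
    have key : (((A k).map π : AddSubgroup (S ⧸ T.addSubgroupOf S)) :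
        Set (S ⧸ T.addSubgroupOf S)) =
        Set.range fun x : (S ⧸ T.addSubgroupOf S) => p ^ k • x := by
      ext x
      constructor
      · rintro ⟨_, ⟨y, rfl⟩, rfl⟩
        exact ⟨π y, (map_nsmul π _ _).symm⟩
      · rintro ⟨y, rfl⟩
        obtain ⟨z, rfl⟩ := QuotientAddGroup.mk'_surjective _ y
        exact ⟨_, ⟨z, rfl⟩, map_nsmul π _ _⟩
    exact Nat.card_congr (Equiv.setCongr key)
  have e2 : (B μ).map (nsmulAddMonoidHom (α := P) p) = B (μ + 1) := by
    ext x
    constructor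
    · rintro ⟨_, ⟨y, rfl⟩, rfl⟩
      exact ⟨y, by simp [pow_succ', mul_smul]⟩
    · rintro ⟨y, rfl⟩
      exact ⟨_, ⟨y, rfl⟩, by simp [pow_succ', mul_smul]⟩
  have e3 : ((A μ).map S.subtype).map (nsmulAddMonoidHom (α := P) p) =
      (A (μ + 1)).map S.subtype := by
    ext x
    constructor
    · rintro ⟨_, ⟨_, ⟨y, rfl⟩, rfl⟩, rfl⟩
      exact ⟨_, ⟨y, rfl⟩, by simp [pow_succ', mul_smul]⟩
    · rintro ⟨_, ⟨y, rfl⟩, rfl⟩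
      exact ⟨_, ⟨_, ⟨y, rfl⟩, rfl⟩, by simp [pow_succ', mul_smul]⟩
  have e4 : ∀ k, Nat.card ((A k).map S.subtype) = Nat.card (A k) := fun k =>
    AddSubgroup.card_map_of_injective S.subtype_injective
  have e5 : ∀ k, Nat.card (B k) = Nat.card (Set.range fun x : P => p ^ k • x) := fun k => rfl
  rw [e1, e1] at h1
  rw [e2, e3, e4, e4, e5, e5] at h2
  have h3 := Nat.mul_le_mul h1 h2
  have p1 : 0 < Nat.card (A μ) := Nat.card_pos
  have p2 : 0 < Nat.card (A (μ + 1)) := Nat.card_pos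
  refine le_of_mul_le_mul_left (a := Nat.card (A μ) * Nat.card (A (μ + 1))) ?_
    (Nat.mul_pos p1 p2)
  calc _ = _ := by ring
    _ ≤ _ := h3
    _ = _ := by ring
end

section
/- Let p be a prime. Suppose P ≅ ⊕_{i=1}^{r} ℤ/p^{a_i}ℤ with a_1 ≥ a_2 ≥ … ≥ a_r ≥ 1 and Q ≅ ⊕_{i=1}^{s} ℤ/p^{c_i}ℤ with c_1 ≥ c_2 ≥ … ≥ c_s ≥ 1, and suppose Q is isomorphic to a subquotient of P (that is, Q ≅ S/T for some subgroups T ≤ S ≤ P). Then s ≤ r and c_i ≤ a_i for every 1 ≤ i ≤ s. -/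
lemma aux_ker (n m : ℕ) (hn : 0 < n) [NeZero m] :
    Nat.card {z : ZMod m // n • z = 0} ≤ n := by
  classical
  have := IsAddCyclic.card_nsmul_eq_zero_le (α := ZMod m) hn
  rw [Nat.card_eq_fintype_card, Fintype.card_subtype]
  exact this

lemma aux_coord (p k m : ℕ) (hp : p.Prime) (hm : k + 1 ≤ m) (v w : Fin p) (q : ZMod (p ^ m))
    (h : p ^ k • ((v : ℕ) : ZMod (p ^ m)) = p ^ k • ((w : ℕ) : ZMod (p ^ m)) + p ^ (k + 1) • q) :
    v = w := by
  haveI : NeZero (p ^ m) := ⟨pow_ne_zero _ hp.ne_zero⟩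
  obtain ⟨t, rfl⟩ := ZMod.natCast_zmod_surjective q
  have h1 : ((p ^ k * v : ℕ) : ZMod (p ^ m)) = ((p ^ k * w + p ^ (k + 1) * t : ℕ) : ZMod (p ^ m)) := by
    push_cast
    simpa [nsmul_eq_mul] using h
  rw [ZMod.natCast_eq_natCast_iff] at h1
  have h2 := h1.of_dvd (pow_dvd_pow p hm)
  rw [show p ^ k * (w : ℕ) + p ^ (k + 1) * t = p ^ k * (w + p * t) by ring, pow_succ] at h2
  have h3 := Nat.ModEq.mul_left_cancel' (pow_ne_zero k hp.ne_zero) h2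
  have h4 : (v : ℕ) ≡ w [MOD p] := by
    simpa [Nat.ModEq] using h3
  exact Fin.ext (Nat.ModEq.eq_of_lt_of_lt h4 v.2 w.2)

lemma aux_main (p : ℕ) (hp : p.Prime) (r s : ℕ)
    (a : Fin r → ℕ) (c : Fin s → ℕ) (hc : Antitone c) (hc1 : ∀ i, 1 ≤ c i)
    (S : AddSubgroup (∀ i : Fin r, ZMod (p ^ a i)))
    (f : S →+ (∀ i : Fin s, ZMod (p ^ c i))) (hf : Function.Surjective f)
    (i : Fin s) (hi : ∀ j : Fin r, (i : ℕ) ≤ j → a j < c i) : False := by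
  classical
  haveI : ∀ j, NeZero (p ^ a j) := fun j => ⟨pow_ne_zero _ hp.ne_zero⟩
  obtain ⟨k, hk⟩ : ∃ k, c i = k + 1 := ⟨c i - 1, by have := hc1 i; omega⟩
  let A : AddSubgroup S := (nsmulAddMonoidHom (α := S) (p ^ k)).range
  let g : A →+ A := nsmulAddMonoidHom p
  have hidx : g.range.index = Nat.card g.ker := AddSubgroup.index_range
  -- upper bound
  have hup : Nat.card g.ker ≤ p ^ (i : ℕ) := by
    let J := {j : Fin r // (j : ℕ) < i}
    let F : g.ker → ∀ j : J, {z : ZMod (p ^ a j.1) // p • z = 0} := fun x j =>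
      ⟨x.1.1.1 j.1, by
        have h := x.2
        rw [AddMonoidHom.mem_ker] at h
        have h2 := congrArg (fun y : A => y.1.1 j.1) h
        simpa [g] using h2⟩
    have hF : Function.Injective F := by
      intro x y hxy
      apply Subtype.ext; apply Subtype.ext; apply Subtype.ext
      have hz : ∀ (x : A) (j : Fin r), (i : ℕ) ≤ j → x.1.1 j = 0 := by
        rintro ⟨x, u, rfl⟩ j hj
        have h3 : a j ≤ k := by have := hi j hj; omega
        have h4 : ((p ^ k : ℕ) : ZMod (p ^ a j)) = 0 :=
          (ZMod.natCast_eq_zero_iff _ _).2 (pow_dvd_pow p h3)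
        have : (p ^ k) • (u.1 j) = 0 := by rw [nsmul_eq_mul, h4, zero_mul]
        simpa using this
      funext j
      by_cases hj : (j : ℕ) < i
      · exact congrArg Subtype.val (congrFun hxy ⟨j, hj⟩)
      · rw [hz _ j (by omega), hz _ j (by omega)]
    calc Nat.card g.ker ≤ _ := Nat.card_le_card_of_injective F hF
      _ = ∏ j : J, Nat.card {z : ZMod (p ^ a j.1) // p • z = 0} := Nat.card_pi
      _ ≤ ∏ j : J, p := Finset.prod_le_prod' fun j _ => aux_ker p _ hp.pos
      _ = p ^ Fintype.card J := by simp
      _ ≤ p ^ (i : ℕ) := by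
        apply Nat.pow_le_pow_right hp.pos
        have := Fintype.card_le_of_injective (fun j : J => (⟨j.1, j.2⟩ : Fin i)) (by
          intro x y h
          simp only [Fin.mk.injEq] at h
          exact Subtype.ext (Fin.ext h))
        simpa using this
  -- lower bound
  have hlow : p ^ ((i : ℕ) + 1) ≤ Nat.card (A ⧸ g.range) := by
    let V : (Fin ((i : ℕ) + 1) → Fin p) → ∀ j : Fin s, ZMod (p ^ c j) := fun v j =>
      if h : (j : ℕ) < i + 1 then ((v ⟨j, h⟩ : ℕ) : ZMod (p ^ c j)) else 0
    choose l hl using hf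
    let G : (Fin ((i : ℕ) + 1) → Fin p) → A ⧸ g.range := fun v =>
      QuotientAddGroup.mk ⟨p ^ k • l (V v), l (V v), rfl⟩
    have hG : Function.Injective G := by
      intro v w hvw
      have h1 := QuotientAddGroup.eq.1 hvw.symm
      obtain ⟨⟨_, u, rfl⟩, hu⟩ := h1
      have h2 := congrArg (fun y : A => f y.1) hu
      simp only [g, nsmulAddMonoidHom_apply, AddSubgroup.coe_nsmul, AddSubgroup.coe_add,
        AddSubgroup.coe_neg, map_add, map_neg, map_nsmul, hl] at h2
      funext j
      have hjs : (j : ℕ) < s := by have := j.2; have := i.2; omega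
      have h3 := congrFun h2 ⟨j, hjs⟩
      simp only [Pi.add_apply, Pi.neg_apply, Pi.smul_apply, V, j.2, dif_pos] at h3
      refine aux_coord p k (c ⟨j, hjs⟩) hp ?_ (v j) (w j) (f u ⟨j, hjs⟩) ?_
      · rw [← hk]
        apply hc
        have := j.2
        exact Fin.le_def.2 (by simp; omega)
      · rw [pow_succ', mul_smul, h3]
        simp
    have := Nat.card_le_card_of_injective G hG
    simpa using this
  have h5 : Nat.card (A ⧸ g.range) = g.range.index := rfl
  have h6 : p ^ (i : ℕ) < p ^ ((i : ℕ) + 1) := Nat.pow_lt_pow_right hp.one_lt (by omega)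
  omega

theorem subquotient_elementary_divisors_le
    (p : ℕ) (hp : p.Prime) (r s : ℕ)
    (a : Fin r → ℕ) (ha : Antitone a) (ha1 : ∀ i, 1 ≤ a i)
    (c : Fin s → ℕ) (hc : Antitone c) (hc1 : ∀ i, 1 ≤ c i)
    (S T : AddSubgroup (∀ i : Fin r, ZMod (p ^ a i))) (hTS : T ≤ S)
    (hQ : Nonempty ((∀ i : Fin s, ZMod (p ^ c i)) ≃+ (S ⧸ T.addSubgroupOf S))) :
    ∃ h : s ≤ r, ∀ i : Fin s, c i ≤ a (Fin.castLE h i) := by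
  obtain ⟨e⟩ := hQ
  have key := aux_main p hp r s a c hc hc1 S
    (e.symm.toAddMonoidHom.comp (QuotientAddGroup.mk' (T.addSubgroupOf S)))
    (e.symm.surjective.comp (QuotientAddGroup.mk'_surjective _))
  have h : s ≤ r := by
    by_contra hlt
    exact key ⟨r, by omega⟩ fun j hj => by
      have := j.2
      simp at hj
      omega
  refine ⟨h, fun i => ?_⟩
  by_contra hlt
  refine key i fun j hj => ?_
  have : a j ≤ a (Fin.castLE h i) := ha (Fin.le_def.2 (by simpa using hj))
  omega
end

section
/- Let h ≥ 1 and d ≥ 1 be integers and j ≥ 0 a natural number. Then Σ_{i=1}^{j} (⌈(i/h)^{1/d}⌉ − 1) ≥ (d/(d+1)) · (j/h)^{(d+1)/d} − j, where the powers are real powers, the sum is over integers i, and ⌈·⌉ denotes the ceiling of a real number. -/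
theorem sum_ceil_rpow_lower_bound
    (h d : ℕ) (hh : 1 ≤ h) (hd : 1 ≤ d) (j : ℕ) :
    (∑ i ∈ Finset.Icc 1 j, ((⌈((i : ℝ) / h) ^ ((1 : ℝ) / d)⌉ : ℝ) - 1)) ≥
      ((d : ℝ) / (d + 1)) * ((j : ℝ) / h) ^ (((d : ℝ) + 1) / d) - j := by
  have hh' : (1 : ℝ) ≤ h := by exact_mod_cast hh
  have hd' : (1 : ℝ) ≤ d := by exact_mod_cast hd
  have hh0 : (0 : ℝ) < h := by linarith
  have hd0 : (0 : ℝ) < d := by linarith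
  induction j with
  | zero =>
    have : ((d : ℝ) + 1) / d ≠ 0 := by positivity
    simp [Real.zero_rpow this]
  | succ k ih =>
    rw [Finset.sum_Icc_succ_top (by omega)]
    set p : ℝ := ((d : ℝ) + 1) / d with hp
    have hp1 : 1 ≤ p := by
      rw [hp, le_div_iff₀ hd0]; linarith
    have hk : (0 : ℝ) ≤ k := Nat.cast_nonneg k
    have hk1 : (0 : ℝ) < (k : ℝ) + 1 := by linarith
    set x : ℝ := ((k + 1 : ℕ) : ℝ) / h with hx
    have hx' : x = ((k : ℝ) + 1) / h := by rw [hx]; push_cast; rfl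
    have hx0 : 0 < x := by rw [hx']; positivity
    have hs : (-1 : ℝ) ≤ -1 / ((k : ℝ) + 1) := by
      rw [le_div_iff₀ hk1]; linarith
    have hb := one_add_mul_self_le_rpow_one_add hs hp1
    have hy : (k : ℝ) / h = x * (1 + -1 / ((k : ℝ) + 1)) := by
      rw [hx']; field_simp; ring
    have hyp : ((k : ℝ) / h) ^ p = x ^ p * (1 + -1 / ((k : ℝ) + 1)) ^ p := by
      rw [hy, Real.mul_rpow hx0.le (by linarith)]
    have hxp : x ^ p = x * x ^ ((1 : ℝ) / d) := by
      have : p = 1 + 1 / d := by rw [hp]; field_simp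
      rw [this, Real.rpow_add hx0, Real.rpow_one]
    have hc := Int.le_ceil (x ^ ((1 : ℝ) / d))
    set t : ℝ := x ^ ((1 : ℝ) / d) with ht
    have ht0 : 0 ≤ t := by positivity
    have hm := mul_le_mul_of_nonneg_left hb (by positivity : 0 ≤ (d : ℝ) / (d + 1) * x ^ p)
    have he : (d : ℝ) / (d + 1) * x ^ p * (1 + p * (-1 / ((k : ℝ) + 1)))
        = (d : ℝ) / (d + 1) * x ^ p - t / h := by
      rw [hxp, hx', hp]; field_simp; ring
    have hth : t / h ≤ t := div_le_self ht0 hh'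
    have hfin : (d : ℝ) / (d + 1) * x ^ p - t / h ≤ (d : ℝ) / (d + 1) * ((k : ℝ) / h) ^ p := by
      rw [hyp, ← he, ← mul_assoc]; exact hm
    push_cast
    linarith
end
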